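/- arXiv:2505.14564 — 7 statements merged into one kernel-verified Lean document; each statement's English description precedes it below -/
import Mathlib

section
/- The Bellman optimality operator for state-value functions 𝒯*_v is a γ-contraction in the sup norm: for all u, v : S → ℝ, ‖𝒯*_v u − 𝒯*_v v‖∞ ≤ γ · ‖u − v‖∞. -/
/-! Whenever `f ≤ g + c` pointwise, averaging against the probability weights `p s a` gives
`𝒯 f ≤ 𝒯 g + γ c` for each action, and hence for the maximum over actions. Taking
`c = ‖u - v‖∞`, both for `(u, v)` and for `(v, u)`, yields the two-sided bound. -/

/-- The sup norm of a real-valued function on a nonempty finite type. -/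
noncomputable def supNorm {ι : Type*} [Fintype ι] [Nonempty ι] (f : ι → ℝ) : ℝ :=
  Finset.univ.sup' Finset.univ_nonempty (fun i => |f i|)

/-- The Bellman optimality operator for state-value functions:
`(𝒯*_v f)(s) = max_a [ r s a + γ * ∑ s', p s a s' * f s' ]`. -/
noncomputable def bellmanOptV {S A : Type*} [Fintype S] [Fintype A] [Nonempty A]
    (p : S → A → S → ℝ) (r : S → A → ℝ) (γ : ℝ) (f : S → ℝ) : S → ℝ :=
  fun s => Finset.univ.sup' Finset.univ_nonempty
    (fun a => r s a + γ * ∑ s', p s a s' * f s')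

/-- Monotonicity and discounted translation of the Bellman operator, combined. -/
lemma bellmanOptV_le_add {S A : Type*} [Fintype S] [Fintype A] [Nonempty A]
    (p : S → A → S → ℝ) (hp0 : ∀ s a s', 0 ≤ p s a s')
    (hp1 : ∀ s a, ∑ s', p s a s' = 1)
    (r : S → A → ℝ) (γ : ℝ) (hγ0 : 0 ≤ γ) (f g : S → ℝ) (c : ℝ)
    (h : ∀ s, f s ≤ g s + c) (s : S) :
    bellmanOptV p r γ f s ≤ bellmanOptV p r γ g s + γ * c := by
  refine Finset.sup'_le _ _ fun a _ => ?_
  have hsum : ∑ s', p s a s' * f s' ≤ ∑ s', p s a s' * g s' + c := by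
    calc ∑ s', p s a s' * f s' ≤ ∑ s', p s a s' * (g s' + c) :=
          Finset.sum_le_sum fun s' _ => mul_le_mul_of_nonneg_left (h s') (hp0 s a s')
      _ = ∑ s', p s a s' * g s' + c := by
          simp only [mul_add, Finset.sum_add_distrib, ← Finset.sum_mul, hp1, one_mul]
  have hmax : r s a + γ * ∑ s', p s a s' * g s' ≤ bellmanOptV p r γ g s :=
    Finset.le_sup' (fun a => r s a + γ * ∑ s', p s a s' * g s') (Finset.mem_univ a)
  have hmul := mul_le_mul_of_nonneg_left hsum hγ0
  linarith

/-- The Bellman optimality operator for state-value functions is a `γ`-contraction in the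
sup norm. -/
theorem bellmanOptV_contraction {S A : Type*} [Fintype S] [Nonempty S] [Fintype A] [Nonempty A]
    (p : S → A → S → ℝ) (hp0 : ∀ s a s', 0 ≤ p s a s')
    (hp1 : ∀ s a, ∑ s', p s a s' = 1)
    (r : S → A → ℝ) (γ : ℝ) (hγ0 : 0 ≤ γ) (hγ1 : γ < 1)
    (u v : S → ℝ) :
    supNorm (fun s => bellmanOptV p r γ u s - bellmanOptV p r γ v s) ≤
      γ * supNorm (fun s => u s - v s) := by
  have hle : ∀ s, |u s - v s| ≤ supNorm (fun s => u s - v s) := fun s =>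
    Finset.le_sup' (fun s => |u s - v s|) (Finset.mem_univ s)
  refine Finset.sup'_le _ _ fun s _ => abs_sub_le_iff.2 ⟨?_, ?_⟩
  · have := bellmanOptV_le_add p hp0 hp1 r γ hγ0 u v (supNorm fun s => u s - v s)
      (fun s => by linarith [(abs_sub_le_iff.1 (hle s)).1]) s
    linarith
  · have := bellmanOptV_le_add p hp0 hp1 r γ hγ0 v u (supNorm fun s => u s - v s)
      (fun s => by linarith [(abs_sub_le_iff.1 (hle s)).2]) s
    linarith
end

section
/- The Bellman optimality operator for state-value functions 𝒯*_v has a unique fixed point f* : S → ℝ, and for any initial function f₀ : S → ℝ the sequence defined by f_{n+1} = 𝒯*_v f_n satisfies ‖f_n − f*‖∞ ≤ γ^n · ‖f₀ − f*‖∞ for all n; in particular f_n converges to f* in the sup norm. -/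
lemma supNorm_eq_norm {ι : Type*} [Fintype ι] [Nonempty ι] (f : ι → ℝ) : supNorm f = ‖f‖ := by
  apply le_antisymm
  · exact Finset.sup'_le _ _ fun i _ => norm_le_pi_norm f i
  · refine (pi_norm_le_iff_of_nonempty f).2 fun i => ?_
    exact Finset.le_sup' (fun i => |f i|) (Finset.mem_univ i)

/-- One-sided form of the contraction estimate; the other side follows by swapping `f` and `g`. -/
lemma bellmanOptV_le {S A : Type*} [Fintype S] [Fintype A] [Nonempty A]
    (p : S → A → S → ℝ) (hp0 : ∀ s a s', 0 ≤ p s a s') (hp1 : ∀ s a, ∑ s', p s a s' = 1)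
    (r : S → A → ℝ) (γ : ℝ) (hγ0 : 0 ≤ γ) (f g : S → ℝ) (s : S) :
    bellmanOptV p r γ f s ≤ bellmanOptV p r γ g s + γ * dist f g := by
  refine Finset.sup'_le _ _ fun a _ => ?_
  have hsum : ∑ s', p s a s' * f s' ≤ ∑ s', p s a s' * g s' + dist f g := by
    calc ∑ s', p s a s' * f s' ≤ ∑ s', p s a s' * (g s' + dist f g) := by
          refine Finset.sum_le_sum fun s' _ => mul_le_mul_of_nonneg_left ?_ (hp0 s a s')
          have h := (le_abs_self _).trans (dist_le_pi_dist f g s')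
          linarith
      _ = ∑ s', p s a s' * g s' + dist f g := by
          simp_rw [mul_add, Finset.sum_add_distrib, ← Finset.sum_mul, hp1, one_mul]
  have hmax : r s a + γ * ∑ s', p s a s' * g s' ≤ bellmanOptV p r γ g s :=
    Finset.le_sup' (fun a => r s a + γ * ∑ s', p s a s' * g s') (Finset.mem_univ a)
  have hmul := mul_le_mul_of_nonneg_left hsum hγ0
  linarith

lemma bellmanOptV_contracting {S A : Type*} [Fintype S] [Fintype A] [Nonempty A]
    (p : S → A → S → ℝ) (hp0 : ∀ s a s', 0 ≤ p s a s') (hp1 : ∀ s a, ∑ s', p s a s' = 1)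
    (r : S → A → ℝ) (γ : ℝ) (hγ0 : 0 ≤ γ) (hγ1 : γ < 1) :
    ContractingWith ⟨γ, hγ0⟩ (bellmanOptV p r γ) := by
  refine ⟨hγ1, LipschitzWith.of_dist_le_mul fun f g => ?_⟩
  change _ ≤ γ * dist f g
  refine (dist_pi_le_iff (by positivity)).2 fun s => ?_
  have h₁ := bellmanOptV_le p hp0 hp1 r γ hγ0 f g s
  have h₂ := bellmanOptV_le p hp0 hp1 r γ hγ0 g f s
  rw [dist_comm g f] at h₂
  rw [Real.dist_eq, abs_le]
  constructor <;> linarith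

/-- The Bellman optimality operator for state-value functions has a unique fixed point `f*`,
and value iteration from any `f₀` satisfies `‖f_n − f*‖∞ ≤ γ^n ‖f₀ − f*‖∞`; in particular
it converges to `f*` in the sup norm. -/
theorem bellmanOptV_fixedPoint {S A : Type*} [Fintype S] [Nonempty S] [Fintype A] [Nonempty A]
    (p : S → A → S → ℝ) (hp0 : ∀ s a s', 0 ≤ p s a s')
    (hp1 : ∀ s a, ∑ s', p s a s' = 1)
    (r : S → A → ℝ) (γ : ℝ) (hγ0 : 0 ≤ γ) (hγ1 : γ < 1) :
    ∃ fstar : S → ℝ,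
      (bellmanOptV p r γ fstar = fstar ∧
        ∀ g : S → ℝ, bellmanOptV p r γ g = g → g = fstar) ∧
      ∀ f₀ : S → ℝ,
        (∀ n : ℕ, supNorm (fun s => ((bellmanOptV p r γ)^[n] f₀) s - fstar s) ≤
            γ ^ n * supNorm (fun s => f₀ s - fstar s)) ∧
        Filter.Tendsto (fun n => supNorm (fun s => ((bellmanOptV p r γ)^[n] f₀) s - fstar s))
          Filter.atTop (nhds 0) := by
  have hT := bellmanOptV_contracting p hp0 hp1 r γ hγ0 hγ1
  have hfix : bellmanOptV p r γ (hT.fixedPoint _) = hT.fixedPoint _ := hT.fixedPoint_isFixedPt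
  refine ⟨hT.fixedPoint _, ⟨hfix, fun g hg => hT.fixedPoint_unique hg⟩, fun f₀ => ?_⟩
  have hdist (f g : S → ℝ) : supNorm (fun s => f s - g s) = dist f g := by
    rw [supNorm_eq_norm, dist_eq_norm]
    rfl
  simp only [hdist]
  constructor
  · intro n
    have h := (hT.toLipschitzWith.iterate n).dist_le_mul f₀ (hT.fixedPoint _)
    rw [Function.iterate_fixed hfix n] at h
    exact_mod_cast h
  · exact tendsto_iff_dist_tendsto_zero.1 (hT.tendsto_iterate_fixedPoint f₀)
end

section
/- The Bellman optimality operator for action-value functions 𝒯*_Q is a γ-contraction in the sup norm: for all u, v : S × A → ℝ, ‖𝒯*_Q u − 𝒯*_Q v‖∞ ≤ γ · ‖u − v‖∞. -/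
/-- The Bellman optimality operator for action-value functions:
`(𝒯*_Q f)(s, a) = r s a + γ * ∑ s', p s a s' * max_{a'} f (s', a')`. -/
noncomputable def bellmanOptQ {S A : Type*} [Fintype S] [Fintype A] [Nonempty A]
    (p : S → A → S → ℝ) (r : S → A → ℝ) (γ : ℝ) (f : S × A → ℝ) : S × A → ℝ :=
  fun x => r x.1 x.2 + γ * ∑ s', p x.1 x.2 s' *
    (Finset.univ.sup' Finset.univ_nonempty (fun a' => f (s', a')))

/-- The maximum over a finite type is nonexpansive for the sup distance. -/
theorem abs_sup'_sub_sup'_le {ι : Type*} [Fintype ι] [Nonempty ι] (f g : ι → ℝ) (c : ℝ)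
    (h : ∀ i, |f i - g i| ≤ c) :
    |Finset.univ.sup' Finset.univ_nonempty f - Finset.univ.sup' Finset.univ_nonempty g| ≤ c := by
  have hf : Finset.univ.sup' Finset.univ_nonempty f ≤
      Finset.univ.sup' Finset.univ_nonempty g + c :=
    Finset.sup'_le _ _ fun i hi => by
      linarith [Finset.le_sup' g hi, (abs_le.mp (h i)).2]
  have hg : Finset.univ.sup' Finset.univ_nonempty g ≤
      Finset.univ.sup' Finset.univ_nonempty f + c :=
    Finset.sup'_le _ _ fun i hi => by
      linarith [Finset.le_sup' f hi, (abs_le.mp (h i)).1]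
  exact abs_le.mpr ⟨by linarith, by linarith⟩

/-- The Bellman optimality operator for action-value functions is a `γ`-contraction in the
sup norm. -/
theorem bellmanOptQ_contraction {S A : Type*} [Fintype S] [Nonempty S] [Fintype A] [Nonempty A]
    (p : S → A → S → ℝ) (hp0 : ∀ s a s', 0 ≤ p s a s')
    (hp1 : ∀ s a, ∑ s', p s a s' = 1)
    (r : S → A → ℝ) (γ : ℝ) (hγ0 : 0 ≤ γ) (hγ1 : γ < 1)
    (u v : S × A → ℝ) :
    supNorm (fun x => bellmanOptQ p r γ u x - bellmanOptQ p r γ v x) ≤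
      γ * supNorm (fun x => u x - v x) := by
  refine Finset.sup'_le _ _ fun x _ => ?_
  have hle : ∀ y, |u y - v y| ≤ supNorm (fun x => u x - v x) := fun y =>
    Finset.le_sup' (fun x => |u x - v x|) (Finset.mem_univ y)
  have hmax := fun s' => abs_sup'_sub_sup'_le (fun a' => u (s', a')) (fun a' => v (s', a')) _
    fun a' => hle (s', a')
  simp only [bellmanOptQ]
  rw [add_sub_add_left_eq_sub, ← mul_sub, ← Finset.sum_sub_distrib, abs_mul, abs_of_nonneg hγ0]
  refine mul_le_mul_of_nonneg_left ?_ hγ0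
  calc _ ≤ ∑ s', p x.1 x.2 s' * supNorm (fun x => u x - v x) := by
        refine (Finset.abs_sum_le_sum_abs _ _).trans (Finset.sum_le_sum fun s' _ => ?_)
        rw [← mul_sub, abs_mul, abs_of_nonneg (hp0 _ _ _)]
        exact mul_le_mul_of_nonneg_left (hmax s') (hp0 _ _ _)
    _ = supNorm (fun x => u x - v x) := by rw [← Finset.sum_mul, hp1, one_mul]
end

section
/- The consistent Bellman operator 𝒯_c is a γ-contraction in the sup norm: for all u, v : S × A → ℝ, ‖𝒯_c u − 𝒯_c v‖∞ ≤ γ · ‖u − v‖∞. -/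
/-- The consistent Bellman operator:
`(𝒯_c f)(s, a) = r s a + γ * ∑ s', p s a s' *
  (if s' ≠ s then max_{a'} f (s', a') else f (s, a))`. -/
noncomputable def consistentBellman {S A : Type*} [Fintype S] [DecidableEq S]
    [Fintype A] [Nonempty A]
    (p : S → A → S → ℝ) (r : S → A → ℝ) (γ : ℝ) (f : S × A → ℝ) : S × A → ℝ :=
  fun x => r x.1 x.2 + γ * ∑ s', p x.1 x.2 s' *
    (if s' ≠ x.1 then Finset.univ.sup' Finset.univ_nonempty (fun a' => f (s', a'))
     else f x)

theorem abs_le_supNorm {ι : Type*} [Fintype ι] [Nonempty ι] (f : ι → ℝ) (i : ι) :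
    |f i| ≤ supNorm f :=
  Finset.le_sup' (fun i => |f i|) (Finset.mem_univ i)

/-- One-sided form of the contraction property. -/
theorem consistentBellman_le_add {S A : Type*} [Fintype S] [DecidableEq S]
    [Fintype A] [Nonempty A]
    (p : S → A → S → ℝ) (hp0 : ∀ s a s', 0 ≤ p s a s')
    (hp1 : ∀ s a, ∑ s', p s a s' = 1)
    (r : S → A → ℝ) (γ : ℝ) (hγ0 : 0 ≤ γ) (u v : S × A → ℝ) (C : ℝ)
    (h : ∀ x, u x ≤ v x + C) (x : S × A) :
    consistentBellman p r γ u x ≤ consistentBellman p r γ v x + γ * C := by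
  unfold consistentBellman
  rw [add_assoc, ← mul_add]
  gcongr
  -- Write `C` as its own average under `p x.1 x.2`, so that the sums compare termwise.
  have hC : C = ∑ s', p x.1 x.2 s' * C := by rw [← Finset.sum_mul, hp1, one_mul]
  conv_rhs => rw [hC]
  rw [← Finset.sum_add_distrib]
  refine Finset.sum_le_sum fun s' _ => ?_
  rw [← mul_add]
  refine mul_le_mul_of_nonneg_left ?_ (hp0 _ _ _)
  split_ifs
  · refine Finset.sup'_le _ _ fun a' _ => (h (s', a')).trans ?_
    gcongr
    exact Finset.le_sup' (fun a' => v (s', a')) (Finset.mem_univ a')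
  · exact h x

/-- The consistent Bellman operator is a `γ`-contraction in the sup norm. -/
theorem consistentBellman_contraction {S A : Type*} [Fintype S] [Nonempty S] [DecidableEq S]
    [Fintype A] [Nonempty A]
    (p : S → A → S → ℝ) (hp0 : ∀ s a s', 0 ≤ p s a s')
    (hp1 : ∀ s a, ∑ s', p s a s' = 1)
    (r : S → A → ℝ) (γ : ℝ) (hγ0 : 0 ≤ γ) (hγ1 : γ < 1)
    (u v : S × A → ℝ) :
    supNorm (fun x => consistentBellman p r γ u x - consistentBellman p r γ v x) ≤
      γ * supNorm (fun x => u x - v x) := by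
  have hb := fun x => abs_le.mp (abs_le_supNorm (fun x => u x - v x) x)
  refine Finset.sup'_le _ _ fun x _ => abs_le.mpr ⟨?_, ?_⟩
  · have := consistentBellman_le_add p hp0 hp1 r γ hγ0 v u (supNorm fun x => u x - v x)
      (fun x => by linarith [(hb x).1]) x
    linarith
  · have := consistentBellman_le_add p hp0 hp1 r γ hγ0 u v (supNorm fun x => u x - v x)
      (fun x => by linarith [(hb x).2]) x
    linarith
end

section
/- The modified advantage operator 𝒯_a is in general not a γ-contraction: there exist a finite Markov decision process (S, A, p, r, γ), a stochastic policy π, a coefficient β > 0, and functions u, v : S × A → ℝ such that ‖𝒯_a u − 𝒯_a v‖∞ > γ · ‖u − v‖∞. -/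
/-- The modified advantage operator with coefficient `β`:
`(𝒯_a f)(s, a) = r s a + γ * ∑ s', p s a s' * (∑ a', π s' a' * f (s', a'))
  + β * (f (s, a) − ∑ a'', π s a'' * f (s, a''))`. -/
noncomputable def advantageOp {S A : Type*} [Fintype S] [Fintype A]
    (p : S → A → S → ℝ) (r : S → A → ℝ) (γ : ℝ) (π : S → A → ℝ) (β : ℝ)
    (f : S × A → ℝ) : S × A → ℝ :=
  fun x => r x.1 x.2 + γ * ∑ s', p x.1 x.2 s' * (∑ a', π s' a' * f (s', a'))
    + β * (f x - ∑ a'', π x.1 a'' * f (x.1, a''))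

/-- The modified advantage operator is in general not a `γ`-contraction: there exist a
finite MDP, a stochastic policy, a coefficient `β > 0`, and functions `u, v` such that
`‖𝒯_a u − 𝒯_a v‖∞ > γ * ‖u − v‖∞`. -/
theorem advantageOp_not_contraction :
    ∃ (S A : Type) (_ : Fintype S) (_ : Fintype A) (_ : Nonempty S) (_ : Nonempty A)
      (p : S → A → S → ℝ) (r : S → A → ℝ) (γ : ℝ) (π : S → A → ℝ) (β : ℝ)
      (u v : S × A → ℝ),
      (∀ s a s', 0 ≤ p s a s') ∧ (∀ s a, ∑ s', p s a s' = 1) ∧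
      0 ≤ γ ∧ γ < 1 ∧
      (∀ s a, 0 ≤ π s a) ∧ (∀ s, ∑ a, π s a = 1) ∧
      0 < β ∧
      supNorm (fun x => advantageOp p r γ π β u x - advantageOp p r γ π β v x) >
        γ * supNorm (fun x => u x - v x) := by
  -- One state and two equally likely actions: `u` is `1` on one action and `-1` on the other, so
  -- its policy average vanishes, the discounted term drops out, and with `β = 1` the operator
  -- preserves the difference `u - 0`, of sup norm `1 > γ = 1 / 2`.
  refine ⟨Unit, Bool, inferInstance, inferInstance, inferInstance, inferInstance,
    fun _ _ _ => 1, fun _ _ => 0, 1 / 2, fun _ _ => 1 / 2, 1,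
    fun x => if x.2 then 1 else -1, fun _ => 0, ?_, ?_, ?_, ?_, ?_, ?_, ?_, ?_⟩
  · intros; norm_num
  · intros; simp
  · norm_num
  · norm_num
  · intros; norm_num
  · intros; norm_num
  · norm_num
  · have hle : supNorm (fun x : Unit × Bool => (if x.2 then (1 : ℝ) else -1) - 0) ≤ 1 := by
      refine Finset.sup'_le _ _ ?_
      rintro ⟨_, b⟩ _
      cases b <;> simp
    refine lt_of_lt_of_le (b := 1) (by linarith) ?_
    refine le_trans ?_ (Finset.le_sup' _ (Finset.mem_univ ((), true)))
    simp [advantageOp]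
end

section
/- For any coefficient β ≥ 0, the modified advantage operator 𝒯_a is Lipschitz continuous in the sup norm with Lipschitz constant γ + 2β: for all u, v : S × A → ℝ, ‖𝒯_a u − 𝒯_a v‖∞ ≤ (γ + 2β) · ‖u − v‖∞; in particular 𝒯_a is continuous and maps bounded functions to bounded functions. -/
theorem abs_weighted_sum_le {ι : Type*} [Fintype ι] (w f : ι → ℝ) (M : ℝ)
    (hw0 : ∀ i, 0 ≤ w i) (hw1 : ∑ i, w i = 1) (hf : ∀ i, |f i| ≤ M) :
    |∑ i, w i * f i| ≤ M :=
  calc |∑ i, w i * f i| ≤ ∑ i, |w i * f i| := Finset.abs_sum_le_sum_abs _ _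
    _ ≤ ∑ i, w i * M := Finset.sum_le_sum fun i _ => by
        rw [abs_mul, abs_of_nonneg (hw0 i)]
        exact mul_le_mul_of_nonneg_left (hf i) (hw0 i)
    _ = M := by rw [← Finset.sum_mul, hw1, one_mul]

/-- For `β ≥ 0` the modified advantage operator is Lipschitz in the sup norm with constant
`γ + 2β`; in particular it is continuous and maps bounded functions to bounded functions. -/
theorem advantageOp_lipschitz {S A : Type*} [Fintype S] [Nonempty S] [Fintype A] [Nonempty A]
    (p : S → A → S → ℝ) (hp0 : ∀ s a s', 0 ≤ p s a s')
    (hp1 : ∀ s a, ∑ s', p s a s' = 1)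
    (r : S → A → ℝ) (γ : ℝ) (hγ0 : 0 ≤ γ) (hγ1 : γ < 1)
    (π : S → A → ℝ) (hπ0 : ∀ s a, 0 ≤ π s a) (hπ1 : ∀ s, ∑ a, π s a = 1)
    (β : ℝ) (hβ : 0 ≤ β) :
    (∀ u v : S × A → ℝ,
      supNorm (fun x => advantageOp p r γ π β u x - advantageOp p r γ π β v x) ≤
        (γ + 2 * β) * supNorm (fun x => u x - v x)) ∧
    Continuous (fun f : (S × A) → ℝ => advantageOp p r γ π β f) ∧
    (∀ f : S × A → ℝ, (∃ M : ℝ, ∀ x, |f x| ≤ M) →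
      ∃ M : ℝ, ∀ x, |advantageOp p r γ π β f x| ≤ M) := by
  refine ⟨fun u v => ?_, ?_, fun f _ => ⟨_, abs_le_supNorm _⟩⟩
  · refine Finset.sup'_le _ _ fun x _ => ?_
    set w : S × A → ℝ := fun x => u x - v x with hw
    have hM : ∀ y, |w y| ≤ supNorm w := abs_le_supNorm w
    have hπ : ∀ s, |∑ a, π s a * w (s, a)| ≤ supNorm w := fun s =>
      abs_weighted_sum_le _ _ _ (hπ0 s) (hπ1 s) fun a => hM (s, a)
    have hP : |∑ s', p x.1 x.2 s' * ∑ a', π s' a' * w (s', a')| ≤ supNorm w :=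
      abs_weighted_sum_le _ _ _ (hp0 x.1 x.2) (hp1 x.1 x.2) hπ
    -- The difference of the two images is the linear part of the operator applied to `w`.
    have hlin : advantageOp p r γ π β u x - advantageOp p r γ π β v x =
        γ * ∑ s', p x.1 x.2 s' * ∑ a', π s' a' * w (s', a')
          + β * (w x - ∑ a, π x.1 a * w (x.1, a)) := by
      simp only [advantageOp, hw, mul_sub, Finset.sum_sub_distrib]
      ring
    beta_reduce
    rw [hlin]
    have h1 := abs_le.mp hP
    have h2 := abs_le.mp (hπ x.1)
    have h3 := abs_le.mp (hM x)
    rw [abs_le]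
    constructor <;> nlinarith
  · unfold advantageOp
    fun_prop
end

section
/- For any coefficient β ≥ 0 and any f : S × A → ℝ, the modified advantage operator 𝒯_{a,β} with coefficient β satisfies ‖𝒯_{a,β} f − 𝒯^π_Q f‖∞ ≤ 2β · ‖f‖∞; consequently, if a sequence of coefficients β_j ≥ 0 tends to 0 as j → ∞, then for every f the functions 𝒯_{a,β_j} f converge to 𝒯^π_Q f in the sup norm, i.e., the family of modified operators converges to the classical Bellman expectation operator. -/
/-- The Bellman expectation operator for action-value functions associated with a policy `π`:
`(𝒯^π_Q f)(s, a) = r s a + γ * ∑ s', p s a s' * (∑ a', π s' a' * f (s', a'))`. -/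
noncomputable def bellmanExpQ {S A : Type*} [Fintype S] [Fintype A]
    (p : S → A → S → ℝ) (r : S → A → ℝ) (γ : ℝ) (π : S → A → ℝ)
    (f : S × A → ℝ) : S × A → ℝ :=
  fun x => r x.1 x.2 + γ * ∑ s', p x.1 x.2 s' * (∑ a', π s' a' * f (s', a'))

theorem supNorm_nonneg {ι : Type*} [Fintype ι] [Nonempty ι] (f : ι → ℝ) : 0 ≤ supNorm f :=
  (abs_nonneg _).trans (abs_le_supNorm f (Classical.arbitrary ι))

theorem abs_weighted_sum_le_supNorm {S A : Type*} [Fintype S] [Nonempty S]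
    [Fintype A] [Nonempty A] (w : A → ℝ) (hw0 : ∀ a, 0 ≤ w a) (hw1 : ∑ a, w a = 1)
    (s : S) (f : S × A → ℝ) : |∑ a, w a * f (s, a)| ≤ supNorm f :=
  calc |∑ a, w a * f (s, a)| ≤ ∑ a, |w a * f (s, a)| := Finset.abs_sum_le_sum_abs _ _
    _ ≤ ∑ a, w a * supNorm f := Finset.sum_le_sum fun a _ => by
        rw [abs_mul, abs_of_nonneg (hw0 a)]
        exact mul_le_mul_of_nonneg_left (abs_le_supNorm f (s, a)) (hw0 a)
    _ = supNorm f := by rw [← Finset.sum_mul, hw1, one_mul]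

/-- For any `β ≥ 0` and any `f`, `‖𝒯_{a,β} f − 𝒯^π_Q f‖∞ ≤ 2β‖f‖∞`; consequently, if
`β_j → 0` then `𝒯_{a,β_j} f → 𝒯^π_Q f` in the sup norm for every `f`. -/
theorem advantageOp_tendsto_bellmanExpQ {S A : Type*} [Fintype S] [Nonempty S]
    [Fintype A] [Nonempty A]
    (p : S → A → S → ℝ) (hp0 : ∀ s a s', 0 ≤ p s a s')
    (hp1 : ∀ s a, ∑ s', p s a s' = 1)
    (r : S → A → ℝ) (γ : ℝ) (hγ0 : 0 ≤ γ) (hγ1 : γ < 1)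
    (π : S → A → ℝ) (hπ0 : ∀ s a, 0 ≤ π s a) (hπ1 : ∀ s, ∑ a, π s a = 1) :
    (∀ β : ℝ, 0 ≤ β → ∀ f : S × A → ℝ,
      supNorm (fun x => advantageOp p r γ π β f x - bellmanExpQ p r γ π f x) ≤
        2 * β * supNorm f) ∧
    (∀ βs : ℕ → ℝ, (∀ j, 0 ≤ βs j) → Filter.Tendsto βs Filter.atTop (nhds 0) →
      ∀ f : S × A → ℝ,
        Filter.Tendsto
          (fun j => supNorm (fun x => advantageOp p r γ π (βs j) f x - bellmanExpQ p r γ π f x))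
          Filter.atTop (nhds 0)) := by
  have key : ∀ β : ℝ, 0 ≤ β → ∀ f : S × A → ℝ,
      supNorm (fun x => advantageOp p r γ π β f x - bellmanExpQ p r γ π f x) ≤
        2 * β * supNorm f := by
    intro β hβ f
    refine Finset.sup'_le _ _ fun x _ => ?_
    have hdiff : advantageOp p r γ π β f x - bellmanExpQ p r γ π f x =
        β * (f x - ∑ a, π x.1 a * f (x.1, a)) := by
      simp only [advantageOp, bellmanExpQ]
      ring
    have havg := abs_weighted_sum_le_supNorm (π x.1) (hπ0 x.1) (hπ1 x.1) x.1 f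
    calc |advantageOp p r γ π β f x - bellmanExpQ p r γ π f x|
        = β * |f x - ∑ a, π x.1 a * f (x.1, a)| := by
          rw [hdiff, abs_mul, abs_of_nonneg hβ]
      _ ≤ β * (supNorm f + supNorm f) := by
          gcongr
          exact (norm_sub_le (f x) _).trans (add_le_add (abs_le_supNorm f x) havg)
      _ = 2 * β * supNorm f := by ring
  refine ⟨key, fun βs hβs hlim f => ?_⟩
  refine squeeze_zero (fun j => supNorm_nonneg _) (fun j => key (βs j) (hβs j) f) ?_
  simpa using (hlim.const_mul 2).mul_const (supNorm f)
end
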